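/- Let R be a local complete intersection and M, N finitely generated R-modules. If Tor_i^R(M,N) is a torsion R-module for all sufficiently large i, then Tor_i^R(M,N) is torsion for all i ≥ 1. -/

import Mathlib

open RingTheory.Sequence CategoryTheory

universe u

noncomputable section

/-- Depth of a module: supremum of lengths of weakly regular sequences consisting of nonunits.
For a f.g. module over a noetherian local ring this is the usual depth, and the zero module
has depth `⊤`. -/
def rdepth (A : Type u) [CommRing A] (M : Type u) [AddCommGroup M] [Module A M] : ℕ∞ :=
  sSup {n : ℕ∞ | ∃ rs : List A, (rs.length : ℕ∞) = n ∧ (∀ r ∈ rs, r ∈ nonunits A) ∧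
    RingTheory.Sequence.IsWeaklyRegular M rs}

/-- Serre's condition `(S_n)`. -/
def SerreCond (R : Type u) [CommRing R] (M : Type u) [AddCommGroup M] [Module R M] (n : ℕ) :
    Prop :=
  ∀ (p : Ideal R) (hp : p.IsPrime), Nontrivial (LocalizedModule p.primeCompl M) →
    min (n : ℕ∞) (Order.height (⟨p, hp⟩ : PrimeSpectrum R)) ≤
      rdepth (Localization.AtPrime p) (LocalizedModule p.primeCompl M)

/-- `Tor_i^R(M, N)` as an object of `ModuleCat R`. -/
def TorModCat (R : Type u) [CommRing R] (i : ℕ) (M N : Type u) [AddCommGroup M] [Module R M]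
    [AddCommGroup N] [Module R N] : ModuleCat.{u} R :=
  ((Tor (ModuleCat.{u} R) i).obj (ModuleCat.of R M)).obj (ModuleCat.of R N)

/-- `Tor_i^R(M, N)` as a type (with its `R`-module structure given by instances below). -/
def TorM (R : Type u) [CommRing R] (i : ℕ) (M N : Type u) [AddCommGroup M] [Module R M]
    [AddCommGroup N] [Module R N] : Type u :=
  TorModCat R i M N

instance (R : Type u) [CommRing R] (i : ℕ) (M N : Type u) [AddCommGroup M] [Module R M]
    [AddCommGroup N] [Module R N] : AddCommGroup (TorM R i M N) :=
  inferInstanceAs (AddCommGroup (TorModCat R i M N))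

instance (R : Type u) [CommRing R] (i : ℕ) (M N : Type u) [AddCommGroup M] [Module R M]
    [AddCommGroup N] [Module R N] : Module R (TorM R i M N) :=
  inferInstanceAs (Module R (TorModCat R i M N))

/-- A regular local ring: noetherian local, whose maximal ideal is generated by a
(weakly) regular sequence. -/
def IsRegLocal (Q : Type u) [CommRing Q] : Prop :=
  IsNoetherianRing Q ∧ IsLocalRing Q ∧
    ∃ rs : List Q, RingTheory.Sequence.IsWeaklyRegular Q rs ∧ (∀ r ∈ rs, r ∈ nonunits Q) ∧
      Ideal.span {x | x ∈ rs} = Ideal.span (nonunits Q)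

/-- A (local) complete intersection: noetherian local ring whose completion is a regular
local ring modulo a regular sequence (of nonunits). -/
def IsCIRing (R : Type u) [CommRing R] : Prop :=
  IsNoetherianRing R ∧ IsLocalRing R ∧
    ∃ (Q : Type u) (_ : CommRing Q), IsRegLocal Q ∧
      ∃ rs : List Q, (∀ r ∈ rs, r ∈ nonunits Q) ∧ RingTheory.Sequence.IsWeaklyRegular Q rs ∧
        Nonempty ((Q ⧸ Ideal.span {x | x ∈ rs}) ≃+* AdicCompletion (Ideal.span (nonunits R)) R)

/-- A hypersurface: noetherian local ring whose completion is a regular local ring modulo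
a single non-zerodivisor in the maximal ideal. -/
def IsHypersurfaceRing (R : Type u) [CommRing R] : Prop :=
  IsNoetherianRing R ∧ IsLocalRing R ∧
    ∃ (Q : Type u) (_ : CommRing Q), IsRegLocal Q ∧
      ∃ f : Q, f ∈ nonunits Q ∧ f ∈ nonZeroDivisors Q ∧
        Nonempty ((Q ⧸ Ideal.span {f}) ≃+* AdicCompletion (Ideal.span (nonunits R)) R)

/-- Maximal Cohen-Macaulay module over a local ring: depth equals the Krull dimension. -/
def IsMCM (R : Type u) [CommRing R] (M : Type u) [AddCommGroup M] [Module R M] : Prop :=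
  (rdepth R M : WithBot ℕ∞) = ringKrullDim R

/-- Cohen-Macaulay local ring. -/
def IsCMLocalRing (A : Type u) [CommRing A] : Prop :=
  IsNoetherianRing A ∧ IsLocalRing A ∧ (rdepth A A : WithBot ℕ∞) = ringKrullDim A

/-- `M` has (constant) rank: free of the same rank at every minimal prime. -/
def HasRank (R : Type u) [CommRing R] (M : Type u) [AddCommGroup M] [Module R M] : Prop :=
  ∃ r : ℕ, ∀ (p : Ideal R) (hp : p.IsPrime), p ∈ minimalPrimes R →
    Nonempty ((LocalizedModule (@Ideal.primeCompl R _ p hp) M)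
      ≃ₗ[Localization (@Ideal.primeCompl R _ p hp)]
      (Fin r → Localization (@Ideal.primeCompl R _ p hp)))

/-- Projective dimension at most `n`. -/
def pdLE (R : Type u) [CommRing R] : ℕ → ∀ (M : Type u) [AddCommGroup M] [Module R M], Prop
  | 0, M, _, _ => Module.Projective R M
  | n+1, M, _, _ => ∃ (P : Type u) (_ : AddCommGroup P) (_ : Module R P),
      Module.Projective R P ∧ ∃ f : P →ₗ[R] M, Function.Surjective f ∧
        pdLE R n (LinearMap.ker f)

/-- Injective dimension at most `n`. -/
def idLE (R : Type u) [CommRing R] : ℕ → ∀ (M : Type u) [AddCommGroup M] [Module R M], Prop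
  | 0, M, _, _ => Module.Injective R M
  | n+1, M, _, _ => ∃ (I : Type u) (_ : AddCommGroup I) (_ : Module R I),
      Module.Injective R I ∧ ∃ f : M →ₗ[R] I, Function.Injective f ∧
        idLE R n (I ⧸ LinearMap.range f)

/-- Gorenstein local ring: noetherian local with finite self-injective dimension. -/
def IsGorensteinLocalRing (R : Type u) [CommRing R] : Prop :=
  IsNoetherianRing R ∧ IsLocalRing R ∧ ∃ n : ℕ, idLE R n R

/-- The map `M → R^ν` obtained from a free cover `ε : R^ν ↠ M^*` by dualizing and composing
with the biduality map; its cokernel is the pushforward `M₁`. -/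
def pushMap (R M : Type u) [CommRing R] [AddCommGroup M] [Module R M] {ν : ℕ}
    (ε : (Fin ν → R) →ₗ[R] Module.Dual R M) : M →ₗ[R] (Fin ν → R) where
  toFun m := fun i => ε (Pi.single i 1) m
  map_add' x y := by funext i; simp
  map_smul' r x := by funext i; simp

/-- Length of a module, as the Krull dimension of its lattice of submodules. -/
def mlen (R : Type u) [CommRing R] (M : Type u) [AddCommGroup M] [Module R M] :
    WithBot ℕ∞ :=
  Order.krullDim (Submodule R M)

/-- An unramified regular local ring: equicharacteristic (contains a field), or of mixed
characteristic `(0, p)` with `p` not in the square of the maximal ideal. -/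
def IsUnramifiedRegLocal (Q : Type u) [CommRing Q] : Prop :=
  IsRegLocal Q ∧
    ((∃ (K : Type u) (_ : Field K), Nonempty (K →+* Q)) ∨
     (CharZero Q ∧ ∃ p : ℕ, p.Prime ∧ (p : Q) ∈ nonunits Q ∧
        (p : Q) ∉ (Ideal.span (nonunits Q)) ^ 2))

/-!
Let `C` be the completion of `R`, a quotient of a regular local ring `Q` by a regular sequence.
Since `C` is faithfully flat over `R`, an `R`-module `T` is torsion as soon as `C_P ⊗ T = 0` for
every associated prime `P` of `C`, and `Tor^R(M, N)` becomes `Tor` over `C_P` after this base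
change. Let `q` be the preimage of `P` in `Q`. Then `C_P` is the quotient of `Q_q` by a regular
sequence of some length `c`, and its maximal ideal is associated to it, so the residue field of
`Q_q` embeds into `C_P`. As `Tor^{Q_q}_i(C_P, -) = 0` for `i > c` and `Q_q` has finite weak
dimension, its weak dimension is at most `c`. Finally, if `A → A/x` is the quotient by a regular
element, the change of rings sequence relating `Tor^A` to `Tor^{A/x}` shows that eventual
vanishing over `A/x` passes up to `A`, and that vanishing over `A` in degrees `> i + 1` passes
down to vanishing over `A/x` in degrees `> i`. Applied `c` times, this turns the bound on `Q_q`
into vanishing over `C_P` in all positive degrees.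
-/

section Exact

open Function

variable {A : Type u} [CommRing A] {P Q K : Type u} [AddCommGroup P] [Module A P]
  [AddCommGroup Q] [Module A Q] [AddCommGroup K] [Module A K] {f : P →ₗ[A] Q} {g : Q →ₗ[A] K}

lemma exact_subtype_range (h : Exact f g) : Exact (LinearMap.range f).subtype g :=
  LinearMap.exact_iff.mpr (h.linearMap_ker_eq.trans (Submodule.range_subtype _).symm)

lemma exact_rangeRestrict (h : Exact f g) : Exact f g.rangeRestrict :=
  ((Submodule.subtype_injective _).comp_exact_iff_exact).mp h

lemma exact_comp_iff_injective {L : Type u} [AddCommGroup L] [Module A L] {k : K →ₗ[A] L}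
    (hfg : Exact f g) (hg : Surjective g) : Exact f (k ∘ₗ g) ↔ Injective k := by
  refine ⟨fun h ↦ (injective_iff_map_eq_zero k).mpr fun z hz ↦ ?_,
    fun h ↦ h.comp_exact_iff_exact.mpr hfg⟩
  obtain ⟨y, rfl⟩ := hg z
  exact (hfg y).mpr ((h y).mp hz)

end Exact

/-- The underlying module `A^(N)` of the canonical free cover of `N`. It is a type of its own so
that instance search does not unfold it to functions. -/
def FreeCover (A N : Type u) [CommRing A] : Type u := N →₀ A

namespace FreeCover

variable (A N : Type u) [CommRing A]

instance : AddCommGroup (FreeCover A N) := inferInstanceAs (AddCommGroup (N →₀ A))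

instance : Module A (FreeCover A N) := inferInstanceAs (Module A (N →₀ A))

instance : Module.Free A (FreeCover A N) := inferInstanceAs (Module.Free A (N →₀ A))

/-- The canonical surjection `A^(N) → N`, sending each basis vector to the element indexing it. -/
def proj [AddCommGroup N] [Module A N] : FreeCover A N →ₗ[A] N :=
  Finsupp.linearCombination A (id : N → N)

lemma proj_surjective [AddCommGroup N] [Module A N] : Function.Surjective (proj A N) :=
  Finsupp.linearCombination_id_surjective A N

end FreeCover

/-- The first syzygy of `N` with respect to its canonical free cover. -/
def Syzygy (A N : Type u) [CommRing A] [AddCommGroup N] [Module A N] :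
    Submodule A (FreeCover A N) :=
  LinearMap.ker (FreeCover.proj A N)

lemma Syzygy.exact_subtype_proj (A N : Type u) [CommRing A] [AddCommGroup N] [Module A N] :
    Function.Exact (Syzygy A N).subtype (FreeCover.proj A N) :=
  LinearMap.exact_subtype_ker_map _

/-- `TorVanishes A n M N` says that `Tor_{n+1}^A(M, N) = 0`, the index being shifted by one so that
every `n` is meaningful. It is phrased through iterated syzygies, so that it can be compared
along ring homomorphisms without derived functors. -/
def TorVanishes (A : Type u) [CommRing A] : ℕ → ∀ (M N : Type u) [AddCommGroup M] [Module A M]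
    [AddCommGroup N] [Module A N], Prop
  | 0, M, N, _, _, _, _ => Function.Injective ((Syzygy A N).subtype.lTensor M)
  | n + 1, M, N, _, _, _, _ => TorVanishes A n M (Syzygy A N)

namespace TorVanishes

open TensorProduct Function

variable {A : Type u} [CommRing A]
  {M M' M'' N F G K L : Type u} [AddCommGroup M] [Module A M] [AddCommGroup M'] [Module A M']
  [AddCommGroup M''] [Module A M''] [AddCommGroup N] [Module A N]
  [AddCommGroup F] [Module A F] [AddCommGroup G] [Module A G]
  [AddCommGroup K] [Module A K] [AddCommGroup L] [Module A L]
  {l : L →ₗ[A] G} {p : G →ₗ[A] M} {k : K →ₗ[A] F} {q : F →ₗ[A] N}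

lemma zero_iff : TorVanishes A 0 M N ↔ Injective ((Syzygy A N).subtype.lTensor M) := by
  rw [TorVanishes]

lemma succ_iff {n : ℕ} : TorVanishes A (n + 1) M N ↔ TorVanishes A n M (Syzygy A N) := by
  rw [TorVanishes]

lemma lTensor_injective_of_lTensor_injective [Module.Flat A G] (hlp : Exact l p)
    (hp : Surjective p) (hkq : Exact k q) (hq : Surjective q) (hk : Injective k)
    (h : Injective (l.lTensor N)) : Injective (k.lTensor M) :=
  lTensor_injective_of_exact_of_exact_of_rTensor_injective hlp hp hkq hq
    ((LinearMap.lTensor_inj_iff_rTensor_inj _ _).mp h)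
    (Module.Flat.lTensor_preserves_injective_linearMap _ hk)

lemma zero_symm (h : TorVanishes A 0 M N) : TorVanishes A 0 N M :=
  zero_iff.mpr <| lTensor_injective_of_lTensor_injective (Syzygy.exact_subtype_proj A N)
    (FreeCover.proj_surjective A N) (Syzygy.exact_subtype_proj A M) (FreeCover.proj_surjective A M)
    (Submodule.subtype_injective _) (zero_iff.mp h)

lemma lTensor_injective (h : TorVanishes A 0 M N) (hkq : Exact k q) (hq : Surjective q)
    (hk : Injective k) : Injective (k.lTensor M) :=
  lTensor_injective_of_lTensor_injective (Syzygy.exact_subtype_proj A M)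
    (FreeCover.proj_surjective A M) hkq hq hk (zero_iff.mp h.zero_symm)

lemma rTensor_injective (h : TorVanishes A 0 M N) (hlp : Exact l p) (hp : Surjective p)
    (hl : Injective l) : Injective (l.rTensor N) :=
  (LinearMap.lTensor_inj_iff_rTensor_inj _ _).mp (h.zero_symm.lTensor_injective hlp hp hl)

lemma of_lTensor_injective [Module.Flat A F] (hkq : Exact k q) (hq : Surjective q)
    (h : Injective (k.lTensor M)) : TorVanishes A 0 M N :=
  zero_symm <| zero_iff.mpr <| lTensor_injective_of_lTensor_injective hkq hq
    (Syzygy.exact_subtype_proj A M) (FreeCover.proj_surjective A M)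
    (Submodule.subtype_injective _) h

-- Both vanishing statements amount to the injectivity of `L ⊗ K → G ⊗ F`.
lemma zero_of_shift [Module.Flat A F] [Module.Flat A G] (hlp : Exact l p) (hp : Surjective p)
    (hl : Injective l) (hkq : Exact k q) (hq : Surjective q) (hk : Injective k)
    (h : TorVanishes A 0 M K) : TorVanishes A 0 L N := by
  have hL : Injective (l.rTensor K) := h.rTensor_injective hlp hp hl
  have hG : Injective (k.lTensor G) := Module.Flat.lTensor_preserves_injective_linearMap _ hk
  have hLF : Injective (l.rTensor F ∘ₗ k.lTensor L) := by
    rw [LinearMap.rTensor_comp_lTensor, ← LinearMap.lTensor_comp_rTensor]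
    exact hG.comp hL
  exact of_lTensor_injective hkq hq (.of_comp hLF)

lemma succ_iff_left {n : ℕ} [Module.Flat A G] (hlp : Exact l p) (hp : Surjective p)
    (hl : Injective l) : TorVanishes A (n + 1) M N ↔ TorVanishes A n L N := by
  induction n generalizing N with
  | zero =>
    have hN := Syzygy.exact_subtype_proj A N
    have hN' := FreeCover.proj_surjective A N
    have hN'' := (Syzygy A N).subtype_injective
    exact succ_iff.trans ⟨zero_of_shift hlp hp hl hN hN' hN'',
      fun h ↦ (zero_of_shift hN hN' hN'' hlp hp hl h.zero_symm).zero_symm⟩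
  | succ n ih => rw [succ_iff, ih, succ_iff]

lemma comm {n : ℕ} : TorVanishes A n M N ↔ TorVanishes A n N M := by
  induction n generalizing M N with
  | zero => exact ⟨zero_symm, zero_symm⟩
  | succ n ih =>
    rw [succ_iff, ih]
    exact (succ_iff_left (Syzygy.exact_subtype_proj A N) (FreeCover.proj_surjective A N)
      (Submodule.subtype_injective _)).symm

lemma succ_iff_right {n : ℕ} [Module.Flat A F] (hkq : Exact k q) (hq : Surjective q)
    (hk : Injective k) : TorVanishes A (n + 1) M N ↔ TorVanishes A n M K := by
  rw [comm, succ_iff_left hkq hq hk, comm]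

lemma of_equiv_right {n : ℕ} (e : M ≃ₗ[A] N) (h : TorVanishes A n L M) : TorVanishes A n L N := by
  have hker : Exact (Syzygy A M).subtype
      (e.toLinearMap ∘ₗ FreeCover.proj A M) := fun x ↦ by
    rw [← Syzygy.exact_subtype_proj A M x, LinearMap.comp_apply]
    exact e.map_eq_zero_iff
  have hcover := e.surjective.comp (FreeCover.proj_surjective A M)
  cases n with
  | zero => exact of_lTensor_injective hker hcover (zero_iff.mp h)
  | succ n =>
    exact (succ_iff_right hker hcover (Submodule.subtype_injective _)).mpr (succ_iff.mp h)

lemma congr_right {n : ℕ} (e : M ≃ₗ[A] N) : TorVanishes A n L M ↔ TorVanishes A n L N :=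
  ⟨of_equiv_right e, of_equiv_right e.symm⟩

lemma congr_left {n : ℕ} (e : M ≃ₗ[A] N) : TorVanishes A n M L ↔ TorVanishes A n N L := by
  rw [comm, congr_right e, comm]

section ShortExact

variable {n : ℕ} {f : M' →ₗ[A] M} {g : M →ₗ[A] M''}

lemma of_exact_middle (hfg : Exact f g) (hg : Surjective g) (hf : Injective f)
    (h' : TorVanishes A n M' N) (h'' : TorVanishes A n M'' N) : TorVanishes A n M N := by
  induction n generalizing N with
  | zero =>
    rw [zero_iff] at *
    set i := (Syzygy A N).subtype
    refine (injective_iff_map_eq_zero _).mpr fun z hz ↦ ?_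
    have hgz : g.rTensor _ z = 0 := h'' <| by
      rw [← LinearMap.comp_apply, LinearMap.lTensor_comp_rTensor, ← LinearMap.rTensor_comp_lTensor,
        LinearMap.comp_apply, hz, map_zero, map_zero]
    obtain ⟨w, rfl⟩ := (rTensor_exact _ hfg hg z).mp hgz
    have hw : f.rTensor (FreeCover A N) (i.lTensor M' w) = 0 := by
      rw [← hz, ← LinearMap.comp_apply, LinearMap.rTensor_comp_lTensor,
        ← LinearMap.lTensor_comp_rTensor, LinearMap.comp_apply]
    have hw' := (map_eq_zero_iff _ (Module.Flat.rTensor_preserves_injective_linearMap f hf)).mp hw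
    rw [(map_eq_zero_iff _ h').mp hw', map_zero]
  | succ n ih =>
    rw [succ_iff] at *
    exact ih h' h''

lemma of_exact_left (hfg : Exact f g) (hg : Surjective g) (hf : Injective f)
    (h : TorVanishes A n M N) (h'' : TorVanishes A (n + 1) M'' N) : TorVanishes A n M' N := by
  induction n generalizing N with
  | zero =>
    have hf' := (succ_iff.mp h'').rTensor_injective hfg hg hf
    rw [zero_iff] at h ⊢
    have : Injective (f.rTensor (FreeCover A N) ∘ₗ (Syzygy A N).subtype.lTensor M') := by
      rw [LinearMap.rTensor_comp_lTensor, ← LinearMap.lTensor_comp_rTensor]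
      exact h.comp hf'
    exact .of_comp this
  | succ n ih =>
    rw [succ_iff] at *
    exact ih h h''

lemma of_exact_right (hfg : Exact f g) (hg : Surjective g) (hf : Injective f)
    (h : TorVanishes A (n + 1) M N) (h' : TorVanishes A n M' N) : TorVanishes A (n + 1) M'' N := by
  induction n generalizing N with
  | zero =>
    rw [succ_iff, zero_iff] at *
    have hf' : Injective (f.rTensor (Syzygy A N)) := by
      have : Injective (f.rTensor (FreeCover A N) ∘ₗ (Syzygy A N).subtype.lTensor M') :=
        (Module.Flat.rTensor_preserves_injective_linearMap f hf).comp h'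
      rw [LinearMap.rTensor_comp_lTensor, ← LinearMap.lTensor_comp_rTensor] at this
      exact .of_comp this
    exact lTensor_injective_of_exact_of_exact_of_rTensor_injective hfg hg
      (Syzygy.exact_subtype_proj A _) (FreeCover.proj_surjective A _) hf' h
  | succ n ih =>
    rw [succ_iff] at *
    exact ih h h'

end ShortExact

lemma of_flat_right {n : ℕ} [Module.Flat A N] : TorVanishes A n M N := by
  induction n generalizing M with
  | zero =>
    exact zero_symm <| zero_iff.mpr <|
      Module.Flat.lTensor_preserves_injective_linearMap _ (Submodule.subtype_injective _)
  | succ n ih =>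
    exact (succ_iff_left (Syzygy.exact_subtype_proj A M) (FreeCover.proj_surjective A M)
      (Submodule.subtype_injective _)).mpr ih

lemma of_flat_left {n : ℕ} [Module.Flat A M] : TorVanishes A n M N :=
  comm.mp of_flat_right

lemma flat_of_ideal (h : ∀ I : Ideal A, TorVanishes A 0 (A ⧸ I) N) : Module.Flat A N :=
  Module.Flat.iff_lTensor_injective'.mpr fun I ↦ (h I).zero_symm.lTensor_injective
    (LinearMap.exact_subtype_mkQ I) (Submodule.mkQ_surjective _) Subtype.val_injective

lemma of_ideal {n : ℕ} (h : ∀ I : Ideal A, TorVanishes A n (A ⧸ I) N) : TorVanishes A n M N := by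
  induction n generalizing N with
  | zero =>
    have := flat_of_ideal h
    exact of_flat_right
  | succ n ih => exact succ_iff.mpr (ih fun I ↦ succ_iff.mp (h I))

lemma of_residueField {n : ℕ} [IsNoetherianRing A] [IsLocalRing A] [Module.Finite A N]
    (h : TorVanishes A n (IsLocalRing.ResidueField A) N) : TorVanishes A n M N := by
  induction n generalizing N with
  | zero =>
    obtain ⟨m, q, hq⟩ := Module.Finite.exists_fin' A N
    have := Module.free_of_lTensor_residueField_injective (LinearMap.ker q).subtype q hq
      (LinearMap.exact_subtype_ker_map q) (h.lTensor_injective (LinearMap.exact_subtype_ker_map q)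
        hq Subtype.val_injective)
    exact of_flat_right
  | succ n ih =>
    obtain ⟨m, q, hq⟩ := Module.Finite.exists_fin' A N
    rw [succ_iff_right (LinearMap.exact_subtype_ker_map q) hq Subtype.val_injective] at h ⊢
    exact ih h

end TorVanishes

section BaseChange

open TensorProduct Function

variable {A B : Type u} [CommRing A] [CommRing B] [Algebra A B]

lemma lTensor_baseChange_injective_iff {K F Y : Type u} [AddCommGroup K] [Module A K]
    [AddCommGroup F] [Module A F] [AddCommGroup Y] [Module A Y] [Module B Y] [IsScalarTower A B Y]
    (f : K →ₗ[A] F) :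
    Injective ((f.baseChange B).lTensor Y) ↔ Injective (f.lTensor Y) := by
  have hf : f.lTensor Y ∘ AlgebraTensorModule.cancelBaseChange A B B Y K =
      AlgebraTensorModule.cancelBaseChange A B B Y F ∘ (f.baseChange B).lTensor Y :=
    congrArg DFunLike.coe (AlgebraTensorModule.lTensor_comp_cancelBaseChange A B B f)
  rw [← EquivLike.comp_injective _ (AlgebraTensorModule.cancelBaseChange A B B Y F), ← hf]
  exact EquivLike.injective_comp (AlgebraTensorModule.cancelBaseChange A B B Y K) _

namespace TorVanishes

variable {L Y : Type u} [AddCommGroup L] [Module A L] [AddCommGroup Y] [Module A Y] [Module B Y]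
  [IsScalarTower A B Y]

theorem baseChange_iff {n : ℕ} (h : ∀ m, TorVanishes A m B L) :
    TorVanishes B n Y (B ⊗[A] L) ↔ TorVanishes A n Y L := by
  induction n generalizing L with
  | zero =>
    have hi : Injective ((Syzygy A L).subtype.baseChange B) := zero_iff.mp (h 0)
    have hex := lTensor_exact B (Syzygy.exact_subtype_proj A L) (FreeCover.proj_surjective A L)
    have hp := LinearMap.lTensor_surjective B (FreeCover.proj_surjective A L)
    rw [zero_iff (N := L), ← lTensor_baseChange_injective_iff (B := B)]
    exact ⟨fun h ↦ h.lTensor_injective (q := (FreeCover.proj A L).baseChange B) hex hp hi,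
      of_lTensor_injective (q := (FreeCover.proj A L).baseChange B) hex hp⟩
  | succ n ih =>
    have hi : Injective ((Syzygy A L).subtype.baseChange B) := zero_iff.mp (h 0)
    have hex := lTensor_exact B (Syzygy.exact_subtype_proj A L) (FreeCover.proj_surjective A L)
    have hp := LinearMap.lTensor_surjective B (FreeCover.proj_surjective A L)
    rw [succ_iff_right (q := (FreeCover.proj A L).baseChange B) hex hp hi, succ_iff]
    exact ih fun m ↦ succ_iff.mp (h (m + 1))

theorem baseChange_iff_of_flat {n : ℕ} [Module.Flat A B] :
    TorVanishes B n Y (B ⊗[A] L) ↔ TorVanishes A n Y L :=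
  baseChange_iff fun _ ↦ of_flat_left

theorem iff_of_flat_isEpi {n : ℕ} [Module.Flat A B] [Algebra.IsEpi A B] {X : Type u}
    [AddCommGroup X] [Module A X] [Module B X] [IsScalarTower A B X] :
    TorVanishes B n Y X ↔ TorVanishes A n Y X :=
  (congr_right (lid' A B X)).symm.trans baseChange_iff_of_flat

end TorVanishes

end BaseChange

section QuotientByRegularElement

open TensorProduct Function

variable {A B : Type u} [CommRing A] [CommRing B] [Algebra A B] {x : A}

lemma isSMulRegular_of_flat (hx : IsSMulRegular A x) (G : Type u) [AddCommGroup G] [Module A G]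
    [Module.Flat A G] : IsSMulRegular G x :=
  Module.Flat.isSMulRegular_of_isRegular (isLeftRegular_iff_isRegular.mp hx)

lemma exact_lsmul_algebraLinearMap (hker : RingHom.ker (algebraMap A B) = Ideal.span {x}) :
    Exact (LinearMap.lsmul A A x) (Algebra.linearMap A B) := fun a ↦ by
  rw [Algebra.linearMap_apply, ← RingHom.mem_ker, hker, Ideal.mem_span_singleton]
  exact exists_congr fun _ ↦ eq_comm

lemma exact_lsmul_mk_one (hsurj : Surjective (algebraMap A B))
    (hker : RingHom.ker (algebraMap A B) = Ideal.span {x})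
    (X : Type u) [AddCommGroup X] [Module A X] :
    Exact (LinearMap.lsmul A X x) (TensorProduct.mk A B X 1) := by
  have h := rTensor_exact X (exact_lsmul_algebraLinearMap hker) hsurj
  refine h.of_ladder_linearEquiv_of_exact (e₁ := TensorProduct.lid A X)
    (e₂ := TensorProduct.lid A X) (e₃ := .refl A _) ?_ ?_ <;> ext <;> simp

lemma mk_one_surjective (hsurj : Surjective (algebraMap A B)) (X : Type u) [AddCommGroup X]
    [Module A X] : Surjective (TensorProduct.mk A B X 1) := by
  have h := (LinearMap.rTensor_surjective X (g := Algebra.linearMap A B) hsurj).comp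
    (TensorProduct.lid A X).symm.surjective
  have hmk : TensorProduct.mk A B X 1 =
      (Algebra.linearMap A B).rTensor X ∘ₗ (TensorProduct.lid A X).symm.toLinearMap := by
    ext; simp
  rw [hmk]
  exact h

lemma exists_exact_baseChange (hsurj : Surjective (algebraMap A B))
    (hker : RingHom.ker (algebraMap A B) = Ideal.span {x}) (hx : IsSMulRegular A x)
    {L G M : Type u} [AddCommGroup L] [Module A L] [AddCommGroup G] [Module A G] [Module.Flat A G]
    [AddCommGroup M] [Module A M] [Module B M] [IsScalarTower A B M]
    {l : L →ₗ[A] G} {p : G →ₗ[A] M} (hlp : Exact l p) (hp : Surjective p) (hl : Injective l) :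
    ∃ δ : M →ₗ[B] B ⊗[A] L, Injective δ ∧ Exact δ (l.baseChange B) := by
  have hxM : LinearMap.lsmul A M x = 0 := by
    have hxB : algebraMap A B x = 0 := by
      rw [← RingHom.mem_ker, hker]
      exact Ideal.mem_span_singleton_self x
    ext m
    simp [← algebraMap_smul B x m, hxB]
  have hzero : Exact (0 : PUnit.{u + 1} →ₗ[A] G) (LinearMap.lsmul A G x) :=
    (LinearMap.exact_zero_iff_injective _ _).mpr (isSMulRegular_of_flat hx G)
  have hid : Exact (LinearMap.id : M →ₗ[A] M) (LinearMap.lsmul A M x) := by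
    simp [hxM, Function.Exact]
  have hL := exact_lsmul_mk_one hsurj hker L
  have hleft : l ∘ₗ LinearMap.lsmul A L x = LinearMap.lsmul A G x ∘ₗ l := by ext; simp
  have hright : p ∘ₗ LinearMap.lsmul A G x = LinearMap.lsmul A M x ∘ₗ p := by ext; simp
  let δ : M →ₗ[A] B ⊗[A] L := SnakeLemma.δ' _ _ _ l p hlp l p hlp hleft hright _ hid _ hL hp hl
  have hδ : Exact (0 : PUnit.{u + 1} →ₗ[A] M) δ :=
    SnakeLemma.exact_δ'_right _ _ _ l p hlp l p hlp hleft hright _ hzero _ hid _ hL hp hl 0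
      (by simp) injective_id
  have hδ' : Exact δ (l.lTensor B) :=
    SnakeLemma.exact_δ'_left _ _ _ l p hlp l p hlp hleft hright _ hid _ hL _
      (exact_lsmul_mk_one hsurj hker G) hp hl _ (by ext; simp) (mk_one_surjective hsurj L)
  refine ⟨δ.extendScalarsOfSurjective hsurj, ?_, hδ'⟩
  exact (injective_iff_map_eq_zero δ).mpr fun m hm ↦ by simpa [eq_comm] using (hδ m).mp hm

namespace TorVanishes

lemma of_isSMulRegular {n : ℕ} (hsurj : Surjective (algebraMap A B))
    (hker : RingHom.ker (algebraMap A B) = Ideal.span {x}) (hx : IsSMulRegular A x)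
    {X : Type u} [AddCommGroup X] [Module A X] (hX : IsSMulRegular X x) :
    TorVanishes A n B X := by
  cases n with
  | zero =>
    refine zero_symm <| of_lTensor_injective (exact_lsmul_algebraLinearMap hker) hsurj ?_
    have hmul : (TensorProduct.rid A X).toLinearMap ∘ₗ (LinearMap.lsmul A A x).lTensor X =
        LinearMap.lsmul A X x ∘ₗ (TensorProduct.rid A X).toLinearMap := by ext; simp
    refine .of_comp (f := TensorProduct.rid A X) ?_
    rw [← LinearEquiv.coe_toLinearMap, ← LinearMap.coe_comp, hmul]
    exact hX.comp (TensorProduct.rid A X).injective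
  | succ n =>
    rw [succ_iff_left (exact_lsmul_algebraLinearMap hker) hsurj hx]
    exact of_flat_left

variable {M N : Type u} [AddCommGroup M] [Module A M] [Module B M] [IsScalarTower A B M]
  [AddCommGroup N] [Module A N] [Module B N] [IsScalarTower A B N]

-- Tensoring a free cover `0 → L → G → M → 0` over `A` with `B` gives `0 → M → B ⊗ L → Ω → 0` and
-- `0 → Ω → B ⊗ G → M → 0`, and `B ⊗ L` computes `Tor^A(M, N)` because `x` is regular on `L`.
lemma exists_shortExact (hsurj : Surjective (algebraMap A B))
    (hker : RingHom.ker (algebraMap A B) = Ideal.span {x}) (hx : IsSMulRegular A x) :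
    ∃ (Y Ω : Type u) (_ : AddCommGroup Y) (_ : Module B Y) (_ : AddCommGroup Ω) (_ : Module B Ω)
      (f : M →ₗ[B] Y) (g : Y →ₗ[B] Ω), Injective f ∧ Exact f g ∧ Surjective g ∧
        ∀ n, (TorVanishes B n Y N ↔ TorVanishes A (n + 1) M N) ∧
          (TorVanishes B n Ω N ↔ TorVanishes B (n + 1) M N) := by
  have : Algebra.IsEpi A B := Algebra.isEpi_of_surjective_algebraMap A B hsurj
  let l := (Syzygy A M).subtype
  let p := FreeCover.proj A M
  have hlp : Exact l p := Syzygy.exact_subtype_proj A M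
  have hp : Surjective p := FreeCover.proj_surjective A M
  have hl : Injective l := Submodule.subtype_injective _
  have hxL : IsSMulRegular (Syzygy A M) x := (isSMulRegular_of_flat hx _).submodule _ _
  obtain ⟨f, hf, hfl⟩ := exists_exact_baseChange hsurj hker hx hlp hp hl
  refine ⟨B ⊗[A] Syzygy A M, LinearMap.range (l.baseChange B), inferInstance, inferInstance,
    inferInstance, inferInstance, f, (l.baseChange B).rangeRestrict, hf, ?_,
    (l.baseChange B).surjective_rangeRestrict, fun n ↦ ⟨?_, ?_⟩⟩
  · exact exact_rangeRestrict hfl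
  · rw [comm, baseChange_iff fun _ ↦ of_isSMulRegular hsurj hker hx hxL, comm,
      succ_iff_left hlp hp hl]
  · have hbase : Exact (l.baseChange B) (p.baseChange B) := lTensor_exact B hlp hp
    rw [← congr_left (lid' A B M), succ_iff_left (exact_subtype_range hbase)
      (LinearMap.lTensor_surjective B hp) (Submodule.subtype_injective _)]

lemma succ_of_quotient {n : ℕ} (hsurj : Surjective (algebraMap A B))
    (hker : RingHom.ker (algebraMap A B) = Ideal.span {x}) (hx : IsSMulRegular A x)
    (h : TorVanishes B n M N) (h' : TorVanishes B (n + 1) M N) : TorVanishes A (n + 1) M N := by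
  obtain ⟨Y, Ω, _, _, _, _, f, g, hf, hfg, hg, hY⟩ :=
    exists_shortExact (M := M) (N := N) hsurj hker hx
  exact (hY n).1.mp (of_exact_middle hfg hg hf h ((hY n).2.mpr h'))

lemma quotient_of_succ {n : ℕ} (hsurj : Surjective (algebraMap A B))
    (hker : RingHom.ker (algebraMap A B) = Ideal.span {x}) (hx : IsSMulRegular A x)
    (h : TorVanishes A (n + 1) M N) (h' : TorVanishes B (n + 2) M N) : TorVanishes B n M N := by
  obtain ⟨Y, Ω, _, _, _, _, f, g, hf, hfg, hg, hY⟩ :=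
    exists_shortExact (M := M) (N := N) hsurj hker hx
  exact of_exact_left hfg hg hf ((hY n).1.mpr h) ((hY (n + 1)).2.mpr h')

end TorVanishes

end QuotientByRegularElement

section RegularSequence

open Function
open scoped Pointwise

/-- `B` is the quotient of `A` by the weakly regular sequence `rs`, through the structure map of
the algebra. A surjection is used rather than a quotient ring so that completions and
localizations qualify. -/
structure IsQuotientByRegularSeq (A B : Type u) [CommRing A] [CommRing B] [Algebra A B]
    (rs : List A) : Prop where
  surjective : Surjective (algebraMap A B)
  isWeaklyRegular : IsWeaklyRegular A rs
  ker_eq : RingHom.ker (algebraMap A B) = Ideal.ofList rs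

namespace IsQuotientByRegularSeq

variable {A B : Type u} [CommRing A] [CommRing B] [Algebra A B] {x : A} {rs : List A}

lemma bijective_of_nil (h : IsQuotientByRegularSeq A B []) : Bijective (algebraMap A B) :=
  ⟨by rw [RingHom.injective_iff_ker_eq_bot, h.ker_eq, Ideal.ofList_nil], h.surjective⟩

lemma tail [Algebra (A ⧸ Ideal.span {x}) B] [IsScalarTower A (A ⧸ Ideal.span {x}) B]
    (h : IsQuotientByRegularSeq A B (x :: rs)) :
    IsQuotientByRegularSeq (A ⧸ Ideal.span {x}) B
      (rs.map (algebraMap A (A ⧸ Ideal.span {x}))) where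
  surjective := .of_comp (g := algebraMap A (A ⧸ Ideal.span {x})) <| by
    rw [← RingHom.coe_comp, ← IsScalarTower.algebraMap_eq]
    exact h.surjective
  isWeaklyRegular := by
    have hspan : (x • ⊤ : Submodule A A) = Ideal.span {x} := by
      rw [← Submodule.ideal_span_singleton_smul, smul_eq_mul, Ideal.mul_top]
    rw [isWeaklyRegular_map_algebraMap_iff]
    exact ((Submodule.quotEquivOfEq _ _ hspan).isWeaklyRegular_congr rs).mp
      ((isWeaklyRegular_cons_iff A x rs).mp h.isWeaklyRegular).2
  ker_eq := by
    have hcomap : (RingHom.ker (algebraMap (A ⧸ Ideal.span {x}) B)).comap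
        (algebraMap A (A ⧸ Ideal.span {x})) = RingHom.ker (algebraMap A B) := by
      rw [RingHom.comap_ker, ← IsScalarTower.algebraMap_eq]
    have hspan : (Ideal.span {x}).map (algebraMap A (A ⧸ Ideal.span {x})) = ⊥ :=
      Ideal.map_quotient_self _
    rw [← Ideal.map_comap_of_surjective _ Ideal.Quotient.mk_surjective (RingHom.ker _),
      ← Ideal.Quotient.algebraMap_eq, hcomap, h.ker_eq, Ideal.ofList_cons, Ideal.map_sup, hspan,
      bot_sup_eq, Ideal.map_ofList]

end IsQuotientByRegularSeq

namespace TorVanishes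

open Filter

lemma iff_of_bijective {A B M N : Type u} [CommRing A] [CommRing B] [Algebra A B]
    [AddCommGroup M] [Module A M] [Module B M] [IsScalarTower A B M] [AddCommGroup N]
    [Module A N] [Module B N] [IsScalarTower A B N] {n : ℕ} (h : Bijective (algebraMap A B)) :
    TorVanishes B n M N ↔ TorVanishes A n M N :=
  have : Module.Flat A B := .of_linearEquiv (LinearEquiv.ofBijective (Algebra.linearMap A B) h).symm
  have : Algebra.IsEpi A B := Algebra.isEpi_of_surjective_algebraMap A B h.surjective
  iff_of_flat_isEpi

theorem eventually_and_forall_of_isQuotientByRegularSeq {A B M N : Type u} [CommRing A]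
    [CommRing B] [Algebra A B] [AddCommGroup M] [Module A M] [Module B M] [IsScalarTower A B M]
    [AddCommGroup N] [Module A N] [Module B N] [IsScalarTower A B N] {rs : List A}
    (h : IsQuotientByRegularSeq A B rs) (hB : ∀ᶠ n in atTop, TorVanishes B n M N) :
    (∀ᶠ n in atTop, TorVanishes A n M N) ∧
      ((∀ n ≥ rs.length, TorVanishes A n M N) → ∀ n, TorVanishes B n M N) := by
  induction hlen : rs.length generalizing A with
  | zero =>
    obtain rfl := List.length_eq_zero_iff.mp hlen
    simp only [iff_of_bijective h.bijective_of_nil] at hB ⊢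
    exact ⟨hB, fun hA n ↦ hA n n.zero_le⟩
  | succ c ih =>
    obtain ⟨x, rs, rfl⟩ := List.exists_cons_of_length_eq_add_one hlen
    let A' := A ⧸ Ideal.span {x}
    have hx : ∀ a ∈ Ideal.span {x}, algebraMap A B a = 0 := fun a ha ↦ by
      rw [← RingHom.mem_ker, h.ker_eq, Ideal.ofList_cons]
      exact Ideal.mem_sup_left ha
    let _ : Algebra A' B := (Ideal.Quotient.lift _ (algebraMap A B) hx).toAlgebra
    have : IsScalarTower A A' B := .of_algebraMap_eq' rfl
    let _ : Module A' M := Module.compHom M (algebraMap A' B)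
    let _ : Module A' N := Module.compHom N (algebraMap A' B)
    have : IsScalarTower A' B M := .of_algebraMap_smul fun _ _ ↦ rfl
    have : IsScalarTower A' B N := .of_algebraMap_smul fun _ _ ↦ rfl
    have : IsScalarTower A A' M := .of_algebraMap_smul (algebraMap_smul B)
    have : IsScalarTower A A' N := .of_algebraMap_smul (algebraMap_smul B)
    have hsurj : Surjective (algebraMap A A') := Ideal.Quotient.mk_surjective
    have hker : RingHom.ker (algebraMap A A') = Ideal.span {x} := Ideal.mk_ker
    have hreg : IsSMulRegular A x := ((isWeaklyRegular_cons_iff A x rs).mp h.isWeaklyRegular).1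
    obtain ⟨hA', ih⟩ := ih h.tail (by simpa using hlen)
    obtain ⟨n₀, hn₀⟩ := eventually_atTop.mp hA'
    refine ⟨?_, fun hA ↦ ih fun n hn ↦ ?_⟩
    · refine (eventually_atTop (p := fun n ↦ TorVanishes A n M N)).mpr ⟨n₀ + 1, fun n hn ↦ ?_⟩
      obtain ⟨n, rfl⟩ := Nat.exists_eq_add_of_le' (Nat.one_le_of_lt hn)
      exact succ_of_quotient hsurj hker hreg (hn₀ n (by lia)) (hn₀ (n + 1) (by lia))
    · refine Nat.strong_decreasing_induction (P := fun n ↦ c ≤ n → TorVanishes A' n M N)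
        ⟨n₀, fun m hm _ ↦ hn₀ m hm.le⟩ (fun m hm hcm ↦ ?_) n hn
      exact quotient_of_succ hsurj hker hreg (hA _ (by lia)) (hm (m + 2) (by lia) (by lia))

lemma quotient_of_isWeaklyRegular {A X N : Type u} [CommRing A] [AddCommGroup X] [Module A X]
    [AddCommGroup N] [Module A N] {rs : List A} (hreg : IsWeaklyRegular X rs) {e : ℕ}
    (h : ∀ n ≥ e, TorVanishes A n X N) {n : ℕ} (hn : e + rs.length ≤ n) :
    TorVanishes A n (X ⧸ (Ideal.ofList rs • ⊤ : Submodule A X)) N := by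
  induction rs generalizing X e with
  | nil =>
    have hbot : (Ideal.ofList ([] : List A) • ⊤ : Submodule A X) = ⊥ := by simp
    rw [congr_left (Submodule.quotEquivOfEqBot _ hbot)]
    exact h n hn
  | cons x rs ih =>
    obtain ⟨hx, hrs⟩ := (isWeaklyRegular_cons_iff X x rs).mp hreg
    rw [congr_left (Submodule.quotOfListConsSMulTopEquivQuotSMulTopInner X x rs)]
    refine ih hrs (e := e + 1) (fun n hn ↦ ?_) (by simp at hn; lia)
    obtain ⟨n, rfl⟩ := Nat.exists_eq_add_of_le' (Nat.one_le_of_lt hn)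
    exact of_exact_right (LinearMap.exact_lsmul_mkQ_smul_top X x) (Submodule.mkQ_surjective _) hx
      (h _ (by lia)) (h _ (by lia))

lemma of_isQuotientByRegularSeq {A B N : Type u} [CommRing A] [CommRing B] [Algebra A B]
    [AddCommGroup N] [Module A N] {rs : List A} (h : IsQuotientByRegularSeq A B rs) {n : ℕ}
    (hn : rs.length ≤ n) : TorVanishes A n B N := by
  have hker : (Ideal.ofList rs • ⊤ : Submodule A A) = LinearMap.ker (Algebra.linearMap A B) := by
    rw [smul_eq_mul, Ideal.mul_top, ← h.ker_eq]
    rfl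
  rw [← congr_left ((Submodule.quotEquivOfEq _ _ hker).trans
    ((Algebra.linearMap A B).quotKerEquivOfSurjective h.surjective))]
  exact quotient_of_isWeaklyRegular h.isWeaklyRegular (fun _ _ ↦ of_flat_left) (e := 0) (by lia)

end TorVanishes

end RegularSequence

section WeakDimension

/-- `WeakDimLE A n` says that the weak global dimension of `A` is at most `n`: `Tor_i^A` vanishes
for all `i > n`. Quantifying the vanishing of `Tor_{n+1}` over all modules is enough. -/
def WeakDimLE (A : Type u) [CommRing A] (n : ℕ) : Prop :=
  ∀ (X Y : Type u) [AddCommGroup X] [Module A X] [AddCommGroup Y] [Module A Y],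
    TorVanishes A n X Y

namespace WeakDimLE

variable {A B : Type u} [CommRing A] [CommRing B] [Algebra A B]

lemma mono {m n : ℕ} (h : WeakDimLE A m) (hmn : m ≤ n) : WeakDimLE A n := by
  induction n, hmn using Nat.le_induction with
  | base => exact h
  | succ n _ ih => exact fun X Y _ _ _ _ ↦ TorVanishes.succ_iff.mpr (ih X _)

lemma of_flat_isEpi [Module.Flat A B] [Algebra.IsEpi A B] {n : ℕ} (h : WeakDimLE A n) :
    WeakDimLE B n := fun X Y _ _ _ _ ↦ by
  let _ : Module A X := Module.compHom X (algebraMap A B)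
  let _ : Module A Y := Module.compHom Y (algebraMap A B)
  have : IsScalarTower A B X := .of_algebraMap_smul fun _ _ ↦ rfl
  have : IsScalarTower A B Y := .of_algebraMap_smul fun _ _ ↦ rfl
  exact TorVanishes.iff_of_flat_isEpi.mpr (h X Y)

lemma of_isLocalization (S : Submonoid A) [IsLocalization S B] {n : ℕ} (h : WeakDimLE A n) :
    WeakDimLE B n :=
  have : Module.Flat A B := IsLocalization.flat B S
  have : Algebra.IsEpi A B := CommRingCat.epi_iff_epi.mp (IsLocalization.epi S B)
  h.of_flat_isEpi

open IsLocalRing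

variable [IsNoetherianRing A] [IsLocalRing A]

lemma of_residueField {n : ℕ} (h : TorVanishes A n (ResidueField A) (ResidueField A)) :
    WeakDimLE A n := fun _ _ _ _ _ _ ↦
  TorVanishes.of_ideal fun _ ↦
    TorVanishes.comm.mp <| .of_residueField <| TorVanishes.comm.mp <| .of_residueField h

theorem of_isRegLocal {Q : Type u} [CommRing Q] (h : IsRegLocal Q) : ∃ n, WeakDimLE Q n := by
  obtain ⟨_, _, rs, hreg, -, hspan⟩ := h
  have hmax : Ideal.ofList rs = maximalIdeal Q := by
    rw [Ideal.ofList, hspan]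
    exact Ideal.span_eq (maximalIdeal Q)
  have hres : IsQuotientByRegularSeq Q (ResidueField Q) rs :=
    ⟨residue_surjective, hreg, ker_residue.trans hmax.symm⟩
  exact ⟨rs.length, of_residueField (.of_isQuotientByRegularSeq hres le_rfl)⟩

-- The residue field `k` embeds into `B`, so if `Tor_{n+2}` of the cokernel and `Tor_{n+1}(B, k)`
-- vanish, so does `Tor_{n+1}(k, k)`: the bound descends until it reaches `rs.length`.
theorem of_isQuotientByRegularSeq {rs : List A} (h : IsQuotientByRegularSeq A B rs)
    (hass : maximalIdeal A ∈ associatedPrimes A B) (hfin : ∃ n, WeakDimLE A n) :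
    WeakDimLE A rs.length := by
  obtain ⟨d, hd⟩ := hfin
  obtain ⟨-, f, hf⟩ := (isAssociatedPrime_iff_exists_injective_linearMap _ _).mp hass
  refine Nat.strong_decreasing_induction (P := fun n ↦ rs.length ≤ n → WeakDimLE A n)
    ⟨d, fun m hm _ ↦ hd.mono hm.le⟩ (fun n hn hlen ↦ .of_residueField ?_) _ le_rfl
  exact .of_exact_left (LinearMap.exact_map_mkQ_range f) (Submodule.mkQ_surjective _) hf
    (.of_isQuotientByRegularSeq h hlen) (hn (n + 1) n.lt_succ_self (by lia) _ _)

end WeakDimLE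

open Filter in
theorem TorVanishes.of_eventually {A B : Type u} [CommRing A] [CommRing B] [Algebra A B]
    [IsNoetherianRing A] [IsLocalRing A] {rs : List A} (h : IsQuotientByRegularSeq A B rs)
    (hass : IsLocalRing.maximalIdeal A ∈ associatedPrimes A B) (hfin : ∃ n, WeakDimLE A n)
    {M N : Type u} [AddCommGroup M] [Module B M] [AddCommGroup N] [Module B N]
    (hv : ∀ᶠ n in atTop, TorVanishes B n M N) (n : ℕ) : TorVanishes B n M N := by
  let _ : Module A M := Module.compHom M (algebraMap A B)
  let _ : Module A N := Module.compHom N (algebraMap A B)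
  have : IsScalarTower A B M := .of_algebraMap_smul fun _ _ ↦ rfl
  have : IsScalarTower A B N := .of_algebraMap_smul fun _ _ ↦ rfl
  have hdim := WeakDimLE.of_isQuotientByRegularSeq h hass hfin
  exact (eventually_and_forall_of_isQuotientByRegularSeq h hv).2
    (fun n hn ↦ hdim.mono hn M N) n

end WeakDimension

section Tor

open TensorProduct Function

variable {A : Type u} [CommRing A]

lemma exact_lTensor_iff_torVanishes (P : ℕ → Type u) [∀ n, AddCommGroup (P n)]
    [∀ n, Module A (P n)] [∀ n, Module.Flat A (P n)] (d : ∀ n, P (n + 1) →ₗ[A] P n)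
    (hd : ∀ n, Exact (d (n + 1)) (d n)) {N : Type u} [AddCommGroup N] [Module A N]
    (ε : P 0 →ₗ[A] N) (hε : Surjective ε) (hdε : Exact (d 0) ε) (X : Type u) [AddCommGroup X]
    [Module A X] (n : ℕ) :
    Exact ((d (n + 1)).lTensor X) ((d n).lTensor X) ↔ TorVanishes A n X N := by
  induction n generalizing P N with
  | zero =>
    have hsurj := (d 0).surjective_rangeRestrict
    have hcomp : (d 0).lTensor X =
        (LinearMap.range (d 0)).subtype.lTensor X ∘ₗ (d 0).rangeRestrict.lTensor X := by
      rw [← LinearMap.lTensor_comp]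
      rfl
    rw [hcomp, exact_comp_iff_injective (lTensor_exact X (exact_rangeRestrict (hd 0)) hsurj)
      (LinearMap.lTensor_surjective X hsurj)]
    exact ⟨.of_lTensor_injective (exact_subtype_range hdε) hε,
      fun h ↦ h.lTensor_injective (exact_subtype_range hdε) hε (Submodule.subtype_injective _)⟩
  | succ n ih =>
    rw [TorVanishes.succ_iff_right (exact_subtype_range hdε) hε (Submodule.subtype_injective _)]
    exact ih (fun m ↦ P (m + 1)) (fun m ↦ d (m + 1)) (fun m ↦ hd (m + 1)) (d 0).rangeRestrict
      (d 0).surjective_rangeRestrict (exact_rangeRestrict (hd 0))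

lemma subsingleton_tensorProduct_homology_iff (S : ShortComplex (ModuleCat.{u} A)) (B : Type u)
    [AddCommGroup B] [Module A B] [Module.Flat A B] :
    Subsingleton (B ⊗[A] S.homology) ↔ Exact (S.f.hom.lTensor B) (S.g.hom.lTensor B) := by
  let G := MonoidalCategory.tensorLeft (ModuleCat.of A B)
  have hG : (S.map G).Exact ↔ Exact (S.f.hom.lTensor B) (S.g.hom.lTensor B) :=
    ShortComplex.ShortExact.moduleCat_exact_iff_function_exact _
  rw [← hG, ShortComplex.exact_iff_isZero_homology, (S.mapHomologyIso G).isZero_iff,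
    ModuleCat.isZero_iff_subsingleton]
  rfl

lemma exact_lTensor_projectiveResolution_iff {N : Type u} [AddCommGroup N] [Module A N]
    (P : ProjectiveResolution (ModuleCat.of A N)) (X : Type u) [AddCommGroup X] [Module A X]
    (n : ℕ) :
    Exact ((P.complex.d (n + 2) (n + 1)).hom.lTensor X) ((P.complex.d (n + 1) n).hom.lTensor X) ↔
      TorVanishes A n X N := by
  have hflat (m : ℕ) : Module.Flat A (P.complex.X m) :=
    have : Module.Projective A (P.complex.X m) :=
      (IsProjective.iff_projective _).mpr (P.projective m)
    inferInstance
  refine exact_lTensor_iff_torVanishes (P.complex.X ·) (fun m ↦ (P.complex.d (m + 1) m).hom)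
    (fun m ↦ ?_) (P.π.f 0).hom ?_ ?_ X n
  · exact (ShortComplex.ShortExact.moduleCat_exact_iff_function_exact _).mp (P.exact_succ m)
  · exact (ModuleCat.epi_iff_surjective _).mp (inferInstanceAs (Epi (P.π.f 0)))
  · exact (ShortComplex.ShortExact.moduleCat_exact_iff_function_exact _).mp P.exact₀

theorem subsingleton_tensorProduct_torM_iff {B M N : Type u} [AddCommGroup B] [Module A B]
    [Module.Flat A B] [AddCommGroup M] [Module A M] [AddCommGroup N] [Module A N] {n : ℕ} :
    Subsingleton (B ⊗[A] TorM A (n + 1) M N) ↔ TorVanishes A n (B ⊗[A] M) N := by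
  let P := projectiveResolution (ModuleCat.of A N)
  let F := (MonoidalCategory.tensoringLeft (ModuleCat.{u} A)).obj (ModuleCat.of A M)
  let S : ShortComplex (ModuleCat.{u} A) := (P.complex.sc' (n + 2) (n + 1) n).map F
  let e : TorM A (n + 1) M N ≃ₗ[A] S.homology := Iso.toLinearEquiv <|
    P.isoLeftDerivedObj F (n + 1) ≪≫
      HomologicalComplex.homologyIsoSc' _ (n + 2) (n + 1) n (by simp) (by simp)
  have hassoc : Exact (S.f.hom.lTensor B) (S.g.hom.lTensor B) ↔
      Exact ((P.complex.d (n + 2) (n + 1)).hom.lTensor (B ⊗[A] M))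
        ((P.complex.d (n + 1) n).hom.lTensor (B ⊗[A] M)) :=
    Exact.iff_of_ladder_linearEquiv (e₁ := TensorProduct.assoc A B M _)
      (e₂ := TensorProduct.assoc A B M _) (e₃ := TensorProduct.assoc A B M _)
      (by ext; rfl) (by ext; rfl)
  rw [(e.lTensor B).toEquiv.subsingleton_congr, subsingleton_tensorProduct_homology_iff, hassoc,
    exact_lTensor_projectiveResolution_iff]

end Tor

section Torsion

open TensorProduct Function IsLocalRing
open scoped nonZeroDivisors

variable {R B C T : Type u} [CommRing R] [CommRing B] [Algebra R B] [CommRing C] [Algebra R C]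
  [AddCommGroup T] [Module R T]

lemma isUnit_algebraMap_of_maximalIdeal_mem_associatedPrimes [IsLocalRing B]
    [IsNoetherianRing B] [Module.Flat R B]
    (h : maximalIdeal B ∈ associatedPrimes B B) {r : R} (hr : r ∈ R⁰) :
    IsUnit (algebraMap R B r) := by
  obtain ⟨hprime, y, hy⟩ := isAssociatedPrime_iff.mp h
  by_contra hnu
  have hry : r • y = r • 0 := by
    rw [smul_zero, Algebra.smul_def]
    simpa [hy, Submodule.mem_colon_singleton] using (mem_maximalIdeal _).mpr hnu
  have hy0 : y = 0 := Module.Flat.isSMulRegular_of_nonZeroDivisors hr hry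
  exact hprime.ne_top (by rw [hy, hy0, Submodule.colon_singleton_zero])

lemma subsingleton_tensorProduct_of_torsion_eq_top (hB : ∀ r ∈ R⁰, IsUnit (algebraMap R B r))
    (hT : Submodule.torsion R T = ⊤) : Subsingleton (B ⊗[R] T) := by
  refine subsingleton_of_forall_eq 0 fun z ↦ ?_
  induction z with
  | zero => rfl
  | add a b ha hb => rw [ha, hb, add_zero]
  | tmul b t =>
    obtain ⟨r, hr⟩ := (Submodule.mem_torsion_iff t).mp (hT ▸ Submodule.mem_top : t ∈ _)
    obtain ⟨c, hc⟩ := (hB r r.2).exists_left_inv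
    have hb : b = (r : R) • (c * b) := by
      rw [Algebra.smul_def, ← mul_assoc, mul_comm _ c, hc, one_mul]
    rw [hb, smul_tmul, ← Submonoid.smul_def, hr, tmul_zero]

lemma exists_mem_associatedPrimes_torsionOf_le [IsNoetherianRing R] {t : T}
    (ht : t ∉ Submodule.torsion R T) :
    ∃ p ∈ associatedPrimes R R, Ideal.torsionOf R T t ≤ p := by
  have hsub : (Ideal.torsionOf R T t : Set R) ⊆ ⋃ p ∈ associatedPrimes R R, (p : Set R) := by
    rw [biUnion_associatedPrimes_eq_compl_nonZeroDivisors]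
    exact fun r hr hr' ↦ ht ((Submodule.mem_torsion_iff t).mpr ⟨⟨r, hr'⟩, hr⟩)
  exact (Ideal.subset_union_prime_finite (associatedPrimes.finite R R) (f := fun p ↦ p) ⊤ ⊤
    fun p hp _ _ ↦ hp.1).mp hsub

lemma exists_mem_associatedPrimes_le_comap [IsNoetherianRing R] [IsNoetherianRing C]
    (hC : Injective (algebraMap R C)) {p : Ideal R} (hp : p ∈ associatedPrimes R R) :
    ∃ P ∈ associatedPrimes C C, p ≤ P.comap (algebraMap R C) := by
  obtain ⟨hprime, x, rfl⟩ := isAssociatedPrime_iff.mp hp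
  have hx : algebraMap R C x ≠ 0 := fun hx ↦ hprime.ne_top <| by
    rw [(map_eq_zero_iff _ hC).mp hx, Submodule.colon_singleton_zero]
  obtain ⟨P, hP, hle⟩ := exists_le_isAssociatedPrime_of_isNoetherianRing C _ hx
  refine ⟨P, hP, fun r hr ↦ hle ?_⟩
  rw [Submodule.mem_colon_singleton, Submodule.mem_bot, smul_eq_mul] at hr ⊢
  rw [← map_mul, hr, map_zero]

lemma nontrivial_tensorProduct_of_torsionOf_le [IsLocalRing B] [Module.Flat R B] {t : T}
    (ht : Ideal.torsionOf R T t ≤ (maximalIdeal B).comap (algebraMap R B)) :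
    Nontrivial (B ⊗[R] T) := by
  let J := Ideal.torsionOf R T t
  have hne : (J • ⊤ : Submodule R B) ≠ ⊤ := by
    rw [Ideal.smul_top_eq_map, ne_eq, Submodule.restrictScalars_eq_top_iff]
    exact ((Ideal.map_le_iff_le_comap.mpr ht).trans_lt
      (Ideal.IsPrime.ne_top inferInstance).lt_top).ne
  have : Nontrivial (B ⧸ (J • ⊤ : Submodule R B)) := Submodule.Quotient.nontrivial_iff.mpr hne
  have : Nontrivial (B ⊗[R] (R ⧸ J)) := (tensorQuotEquivQuotSMul B J).toEquiv.nontrivial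
  let f : (R ⧸ J) →ₗ[R] T :=
    (Submodule.subtype _) ∘ₗ (Ideal.quotTorsionOfEquivSpanSingleton R T t).toLinearMap
  have hf : Injective f := (Submodule.subtype_injective _).comp (LinearEquiv.injective _)
  exact (Module.Flat.lTensor_preserves_injective_linearMap (M := B) f hf).nontrivial

lemma torsion_eq_top_of_subsingleton_localization [IsNoetherianRing R] [IsNoetherianRing C]
    [Module.Flat R C] (hC : Injective (algebraMap R C))
    (h : ∀ (P : Ideal C) [P.IsPrime], P ∈ associatedPrimes C C →
      Subsingleton (Localization.AtPrime P ⊗[R] T)) : Submodule.torsion R T = ⊤ := by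
  by_contra hne
  obtain ⟨t, -, ht⟩ := SetLike.exists_of_lt (Ne.lt_top hne)
  obtain ⟨p, hp, htp⟩ := exists_mem_associatedPrimes_torsionOf_le ht
  obtain ⟨P, hP, hpP⟩ := exists_mem_associatedPrimes_le_comap hC hp
  have : P.IsPrime := hP.1
  have : Module.Flat C (Localization.AtPrime P) := IsLocalization.flat _ P.primeCompl
  have : Module.Flat R (Localization.AtPrime P) := .trans R C _
  refine not_subsingleton_iff_nontrivial.mpr (nontrivial_tensorProduct_of_torsionOf_le (t := t) ?_)
    (h P hP)
  rw [IsScalarTower.algebraMap_eq R C, ← Ideal.comap_comap, ← Ideal.under_def,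
    ← Ideal.under_def, IsLocalization.AtPrime.under_maximalIdeal _ P]
  exact htp.trans hpP

end Torsion

section CompleteIntersection

open TensorProduct Function IsLocalRing Filter

lemma comap_mem_associatedPrimes {A B M : Type u} [CommRing A] [CommRing B] [Algebra A B]
    [AddCommGroup M] [Module A M] [Module B M] [IsScalarTower A B M] {P : Ideal B}
    (hP : P ∈ associatedPrimes B M) : P.comap (algebraMap A B) ∈ associatedPrimes A M := by
  obtain ⟨hprime, x, rfl⟩ := hP
  refine ⟨hprime.comap _, x, ?_⟩
  rw [Ideal.comap_radical]
  congr 1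
  ext a
  simp [Submodule.mem_colon_singleton]

lemma IsQuotientByRegularSeq.maximalIdeal_mem_associatedPrimes {A B : Type u} [CommRing A]
    [CommRing B] [Algebra A B] [IsLocalRing A] [IsLocalRing B] {rs : List A}
    (h : IsQuotientByRegularSeq A B rs) (hB : maximalIdeal B ∈ associatedPrimes B B) :
    maximalIdeal A ∈ associatedPrimes A B := by
  have : IsLocalHom (algebraMap A B) := .of_surjective _ h.surjective
  rw [← maximalIdeal_comap (algebraMap A B)]
  exact comap_mem_associatedPrimes hB

lemma IsQuotientByRegularSeq.localization {A B : Type u} [CommRing A] [CommRing B] [Algebra A B]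
    {rs : List A} (h : IsQuotientByRegularSeq A B rs) (P : Ideal B) [P.IsPrime] :
    letI := Localization.AtPrime.algebraOfLiesOver (P.under A) P
    IsQuotientByRegularSeq (Localization.AtPrime (P.under A)) (Localization.AtPrime P)
      (rs.map (algebraMap A (Localization.AtPrime (P.under A)))) :=
  letI := Localization.AtPrime.algebraOfLiesOver (P.under A) P
  have : Module.Flat A (Localization.AtPrime (P.under A)) :=
    IsLocalization.flat _ (P.under A).primeCompl
  { surjective := RingHom.surjective_localRingHom_of_surjective _ h.surjective P
    isWeaklyRegular := h.isWeaklyRegular.of_flat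
    ker_eq := by
      rw [← Ideal.map_ofList, ← h.ker_eq]
      exact IsLocalization.ker_map (M := (P.under A).primeCompl) (Localization.AtPrime P)
        (algebraMap A B) (Submonoid.map_comap_eq_of_surjective h.surjective P.primeCompl) }

variable {R : Type u} [CommRing R] {M N : Type u} [AddCommGroup M] [Module R M]
  [AddCommGroup N] [Module R N]

theorem subsingleton_tensorProduct_torM_of_eventually {A B : Type u} [CommRing A] [CommRing B]
    [Algebra R B] [Algebra A B] [Module.Flat R B] [IsNoetherianRing A] [IsLocalRing A]
    [IsLocalRing B] {rs : List A} (h : IsQuotientByRegularSeq A B rs)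
    (hB : maximalIdeal B ∈ associatedPrimes B B) (hfin : ∃ n, WeakDimLE A n)
    (hv : ∀ᶠ i in atTop, Submodule.torsion R (TorM R i M N) = ⊤) (n : ℕ) :
    Subsingleton (B ⊗[R] TorM R (n + 1) M N) := by
  have : IsNoetherianRing B := isNoetherianRing_of_surjective A B _ h.surjective
  have key (n : ℕ) : Subsingleton (B ⊗[R] TorM R (n + 1) M N) ↔
      TorVanishes B n (B ⊗[R] M) (B ⊗[R] N) :=
    subsingleton_tensorProduct_torM_iff.trans TorVanishes.baseChange_iff_of_flat.symm
  refine (key n).mpr (.of_eventually h (h.maximalIdeal_mem_associatedPrimes hB) hfin ?_ n)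
  filter_upwards [(tendsto_add_atTop_nat 1).eventually hv] with i hi
  exact (key i).mp <| subsingleton_tensorProduct_of_torsion_eq_top
    (fun _ ↦ isUnit_algebraMap_of_maximalIdeal_mem_associatedPrimes hB) hi

theorem torsion_torM_eq_top_of_isQuotientByRegularSeq [IsNoetherianRing R] {A C : Type u}
    [CommRing A] [CommRing C] [Algebra R C] [Algebra A C] [Module.Flat R C] [IsNoetherianRing A]
    (hC : Injective (algebraMap R C)) {rs : List A} (h : IsQuotientByRegularSeq A C rs)
    (hfin : ∃ n, WeakDimLE A n)
    (hv : ∀ᶠ i in atTop, Submodule.torsion R (TorM R i M N) = ⊤) (n : ℕ) :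
    Submodule.torsion R (TorM R (n + 1) M N) = ⊤ := by
  have : IsNoetherianRing C := isNoetherianRing_of_surjective A C _ h.surjective
  refine torsion_eq_top_of_subsingleton_localization hC fun P _ hP ↦ ?_
  let q := P.under A
  let _ := Localization.AtPrime.algebraOfLiesOver q P
  have : Module.Flat C (Localization.AtPrime P) := IsLocalization.flat _ P.primeCompl
  have : Module.Flat R (Localization.AtPrime P) := .trans R C _
  have : IsNoetherianRing (Localization.AtPrime q) :=
    IsLocalization.isNoetherianRing q.primeCompl _ inferInstance
  exact subsingleton_tensorProduct_torM_of_eventually (h.localization P)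
    (Module.associatedPrimes.mem_associatedPrimes_atPrime_of_mem_associatedPrimes hP)
    (hfin.imp fun _ ↦ .of_isLocalization q.primeCompl) hv n

lemma isQuotientByRegularSeq_of_ringEquiv {A C : Type u} [CommRing A] [CommRing C] {rs : List A}
    (hreg : IsWeaklyRegular A rs) (e : (A ⧸ Ideal.ofList rs) ≃+* C) :
    letI := (e.toRingHom.comp (Ideal.Quotient.mk (Ideal.ofList rs))).toAlgebra
    IsQuotientByRegularSeq A C rs :=
  letI := (e.toRingHom.comp (Ideal.Quotient.mk (Ideal.ofList rs))).toAlgebra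
  { surjective := e.surjective.comp Ideal.Quotient.mk_surjective
    isWeaklyRegular := hreg
    ker_eq := (RingHom.ker_equiv_comp _ e).trans Ideal.mk_ker }

lemma injective_algebraMap_adicCompletion [IsNoetherianRing R] [IsLocalRing R] {I : Ideal R}
    (hI : I ≠ ⊤) : Injective (algebraMap R (AdicCompletion I R)) := by
  have : IsHausdorff I R := .of_isLocalRing I R hI
  exact AdicCompletion.of_injective I R

end CompleteIntersection

theorem stmt11_general (R : Type u) [CommRing R] (hR : IsCIRing R)
    (M N : Type u) [AddCommGroup M] [Module R M] [AddCommGroup N] [Module R N]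
    (hv : ∃ n0 : ℕ, ∀ i ≥ n0, Submodule.torsion R (TorM R i M N) = ⊤) :
    ∀ i ≥ 1, Submodule.torsion R (TorM R i M N) = ⊤ := by
  obtain ⟨_, _, Q, _, hQ, rs, -, hreg, ⟨e⟩⟩ := hR
  intro i hi
  obtain ⟨n, rfl⟩ := Nat.exists_eq_add_of_le' hi
  let 𝔪 : Ideal R := Ideal.span (nonunits R)
  have h𝔪 : 𝔪 ≠ ⊤ := (Ideal.span_eq (IsLocalRing.maximalIdeal R)).trans_ne
    (IsLocalRing.maximalIdeal.isMaximal R).ne_top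
  have : IsNoetherianRing Q := hQ.1
  have : Module.Flat R (AdicCompletion 𝔪 R) := AdicCompletion.flat_of_isNoetherian 𝔪
  let _ : Algebra Q (AdicCompletion 𝔪 R) :=
    (e.toRingHom.comp (Ideal.Quotient.mk (Ideal.ofList rs))).toAlgebra
  exact torsion_torM_eq_top_of_isQuotientByRegularSeq (injective_algebraMap_adicCompletion h𝔪)
    (isQuotientByRegularSeq_of_ringEquiv hreg e) (WeakDimLE.of_isRegLocal hQ)
    (Filter.eventually_atTop.mpr hv) n

/-- over a complete intersection, if `Tor_i(M,N)` is torsion for `i ≫ 0` then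
it is torsion for all `i ≥ 1`. -/
theorem stmt11 (R : Type u) [CommRing R] (hR : IsCIRing R)
    (M N : Type u) [AddCommGroup M] [Module R M] [Module.Finite R M]
    [AddCommGroup N] [Module R N] [Module.Finite R N]
    (hv : ∃ n0 : ℕ, ∀ i ≥ n0, Submodule.torsion R (TorM R i M N) = ⊤) :
    ∀ i ≥ 1, Submodule.torsion R (TorM R i M N) = ⊤ :=
  stmt11_general R hR M N hv

end
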